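/- arXiv:1606.00968 — 3 statements merged into one kernel-verified Lean document; each statement's English description precedes it below -/
import Mathlib

section
/- Let φ : ℝ^k → ℝ be a differentiable, non-negative function whose gradient is H-Lipschitz with respect to the Euclidean norm (‖∇φ(a) - ∇φ(a')‖ ≤ H·‖a - a'‖ for all a, a'), where H > 0. Then for all a, a' ∈ ℝ^k, (φ(a) - φ(a'))² ≤ 6·H·(φ(a) + φ(a'))·‖a - a'‖². -/
/-!
Let `K` be a Lipschitz constant of the derivative `Dφ`. Since `φ` lies below its first-order
expansion plus the quadratic `K / 2 * ‖v‖ ^ 2` and is non-negative, that quadratic upper bound is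
non-negative along every line, so its discriminant gives `‖Dφ x‖ ^ 2 ≤ 2 * K * φ x`. Inserting
this back into the upper bound completes the square,
`φ (x + v) ≤ (√(φ x) + √(K / 2) * ‖v‖) ^ 2`, so `√φ` is `√(K / 2)`-Lipschitz. It remains to factor
`φ a - φ b` as `(√(φ a) - √(φ b)) * (√(φ a) + √(φ b))`. This yields the constant `K` in
place of `6 * K`.
-/

open scoped NNReal

section NormedSpace

variable {E F : Type*} [NormedAddCommGroup E] [NormedSpace ℝ E]
  [NormedAddCommGroup F] [NormedSpace ℝ F] {K : ℝ≥0}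

theorem norm_add_sub_sub_fderiv_le_of_lipschitzWith {f : E → F} (hf : Differentiable ℝ f)
    (hK : LipschitzWith K (fderiv ℝ f)) (x v : E) :
    ‖f (x + v) - f x - fderiv ℝ f x v‖ ≤ K / 2 * ‖v‖ ^ 2 := by
  let remainder : ℝ → F := fun t ↦ f (x + t • v) - f x - t • fderiv ℝ f x v
  have hremainder (t : ℝ) :
      HasDerivAt remainder ((fderiv ℝ f (x + t • v) - fderiv ℝ f x) v) t := by
    have hline : HasDerivAt (fun t : ℝ ↦ x + t • v) v t := by
      simpa using ((hasDerivAt_id t).smul_const v).const_add x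
    simpa using (((hf _).hasFDerivAt.comp_hasDerivAt t hline).sub_const (f x)).fun_sub
      ((hasDerivAt_id t).smul_const (fderiv ℝ f x v))
  have hbound (t : ℝ) :
      HasDerivAt (fun t : ℝ ↦ K / 2 * ‖v‖ ^ 2 * t ^ 2) (K * ‖v‖ ^ 2 * t) t := by
    refine ((hasDerivAt_pow 2 t).const_mul (K / 2 * ‖v‖ ^ 2)).congr_deriv ?_
    push_cast
    ring
  have hderiv_le (t : ℝ) (ht : t ∈ Set.Ico (0 : ℝ) 1) :
      ‖(fderiv ℝ f (x + t • v) - fderiv ℝ f x) v‖ ≤ K * ‖v‖ ^ 2 * t :=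
    calc
      _ ≤ ‖fderiv ℝ f (x + t • v) - fderiv ℝ f x‖ * ‖v‖ := ContinuousLinearMap.le_opNorm _ v
      _ ≤ K * ‖x + t • v - x‖ * ‖v‖ := by gcongr; exact hK.norm_sub_le _ _
      _ = K * ‖v‖ ^ 2 * t := by
        rw [add_sub_cancel_left, norm_smul, Real.norm_of_nonneg ht.1]
        ring
  have hle := image_norm_le_of_norm_deriv_right_le_deriv_boundary (a := 0) (b := 1)
    (fun t _ ↦ (hremainder t).continuousAt.continuousWithinAt)
    (fun t _ ↦ (hremainder t).hasDerivWithinAt) (by simp [remainder]) hbound hderiv_le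
    (Set.right_mem_Icc.2 zero_le_one)
  simpa [remainder] using hle

variable {φ : E → ℝ}

theorem le_add_fderiv_add_of_lipschitzWith (hφ : Differentiable ℝ φ)
    (hK : LipschitzWith K (fderiv ℝ φ)) (x v : E) :
    φ (x + v) ≤ φ x + fderiv ℝ φ x v + K / 2 * ‖v‖ ^ 2 := by
  have h := (Real.le_norm_self _).trans (norm_add_sub_sub_fderiv_le_of_lipschitzWith hφ hK x v)
  linarith

theorem norm_fderiv_le_sqrt_of_nonneg_of_lipschitzWith (hφ : Differentiable ℝ φ)
    (hnonneg : ∀ x, 0 ≤ φ x) (hK : LipschitzWith K (fderiv ℝ φ)) (x : E) :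
    ‖fderiv ℝ φ x‖ ≤ √(2 * K * φ x) := by
  refine ContinuousLinearMap.opNorm_le_bound _ (Real.sqrt_nonneg _) fun v ↦ ?_
  have hquadratic (t : ℝ) :
      0 ≤ K / 2 * ‖v‖ ^ 2 * (t * t) + fderiv ℝ φ x v * t + φ x :=
    calc
      0 ≤ φ (x + t • v) := hnonneg _
      _ ≤ φ x + fderiv ℝ φ x (t • v) + K / 2 * ‖t • v‖ ^ 2 :=
        le_add_fderiv_add_of_lipschitzWith hφ hK x (t • v)
      _ = _ := by
        rw [map_smul, smul_eq_mul, norm_smul, mul_pow, Real.norm_eq_abs, sq_abs]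
        ring
  have hsq : fderiv ℝ φ x v ^ 2 ≤ 2 * K * φ x * ‖v‖ ^ 2 := by
    have hdiscrim := discrim_le_zero hquadratic
    rw [discrim] at hdiscrim
    linarith
  calc
    ‖fderiv ℝ φ x v‖ ≤ √(2 * K * φ x * ‖v‖ ^ 2) := Real.abs_le_sqrt hsq
    _ = √(2 * K * φ x) * ‖v‖ := by
      rw [Real.sqrt_mul' _ (sq_nonneg ‖v‖), Real.sqrt_sq (norm_nonneg v)]

theorem lipschitzWith_sqrt_of_nonneg_of_lipschitzWith_fderiv (hφ : Differentiable ℝ φ)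
    (hnonneg : ∀ x, 0 ≤ φ x) (hK : LipschitzWith K (fderiv ℝ φ)) :
    LipschitzWith (NNReal.sqrt (K / 2)) fun x ↦ √(φ x) := by
  refine LipschitzWith.of_le_add_mul _ fun a b ↦ Real.sqrt_le_iff.2 ⟨by positivity, ?_⟩
  have hsqrt : √(2 * K * φ b) = 2 * √(K / 2) * √(φ b) := by
    rw [show 2 * K * φ b = 2 ^ 2 * (K / 2) * φ b by ring, Real.sqrt_mul (by positivity),
      Real.sqrt_mul (by positivity), Real.sqrt_sq zero_le_two]
  rw [dist_eq_norm, Real.coe_sqrt, NNReal.coe_div, NNReal.coe_ofNat]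
  calc
    φ a = φ (b + (a - b)) := by rw [add_sub_cancel]
    _ ≤ φ b + fderiv ℝ φ b (a - b) + K / 2 * ‖a - b‖ ^ 2 :=
      le_add_fderiv_add_of_lipschitzWith hφ hK b (a - b)
    _ ≤ φ b + √(2 * K * φ b) * ‖a - b‖ + K / 2 * ‖a - b‖ ^ 2 := by
      gcongr
      exact (Real.le_norm_self _).trans <| ContinuousLinearMap.le_of_opNorm_le _
        (norm_fderiv_le_sqrt_of_nonneg_of_lipschitzWith hφ hnonneg hK b) _
    _ = √(φ b) ^ 2 + 2 * √(K / 2) * √(φ b) * ‖a - b‖ + √(K / 2) ^ 2 * ‖a - b‖ ^ 2 := by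
      rw [hsqrt, Real.sq_sqrt (hnonneg b), Real.sq_sqrt (by positivity)]
    _ = (√(φ b) + √(K / 2) * ‖a - b‖) ^ 2 := by ring

theorem multi_dim_H_bound_general (hφ : Differentiable ℝ φ) (hnonneg : ∀ x, 0 ≤ φ x)
    (hK : LipschitzWith K (fderiv ℝ φ)) (a b : E) :
    (φ a - φ b) ^ 2 ≤ K * (φ a + φ b) * ‖a - b‖ ^ 2 := by
  have hsqrt : |√(φ a) - √(φ b)| ≤ √(K / 2) * ‖a - b‖ := by
    simpa using
      (lipschitzWith_sqrt_of_nonneg_of_lipschitzWith_fderiv hφ hnonneg hK).norm_sub_le a b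
  calc
    (φ a - φ b) ^ 2 = |√(φ a) - √(φ b)| ^ 2 * (√(φ a) + √(φ b)) ^ 2 := by
      rw [sq_abs, ← mul_pow, mul_comm, ← sq_sub_sq, Real.sq_sqrt (hnonneg a),
        Real.sq_sqrt (hnonneg b)]
    _ ≤ (√(K / 2) * ‖a - b‖) ^ 2 * (2 * (√(φ a) ^ 2 + √(φ b) ^ 2)) := by
      gcongr
      exact add_sq_le
    _ = K * (φ a + φ b) * ‖a - b‖ ^ 2 := by
      rw [mul_pow, Real.sq_sqrt (by positivity), Real.sq_sqrt (hnonneg a),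
        Real.sq_sqrt (hnonneg b)]
      ring

end NormedSpace

theorem lipschitzWith_gradient_iff {𝕜 E : Type*} [RCLike 𝕜] [NormedAddCommGroup E]
    [InnerProductSpace 𝕜 E] [CompleteSpace E] {f : E → 𝕜} {K : ℝ≥0} :
    LipschitzWith K (gradient f) ↔ LipschitzWith K (fderiv 𝕜 f) := by
  simp only [LipschitzWith, gradient, LinearIsometryEquiv.edist_map]

/-- Lemma 2 of the paper (multi-dimensional case): if `φ : ℝ^k → ℝ` is differentiable,
non-negative, and has `H`-Lipschitz gradient (`H > 0`), then for all `a, a'`,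
`(φ(a) - φ(a'))² ≤ 6·H·(φ(a) + φ(a'))·‖a - a'‖²`. -/
theorem multi_dim_H_bound {k : ℕ}
    (φ : EuclideanSpace ℝ (Fin k) → ℝ) (H : ℝ) (hH : 0 < H)
    (hdiff : Differentiable ℝ φ)
    (hnonneg : ∀ a : EuclideanSpace ℝ (Fin k), 0 ≤ φ a)
    (hsmooth : ∀ a a' : EuclideanSpace ℝ (Fin k),
      ‖gradient φ a - gradient φ a'‖ ≤ H * ‖a - a'‖) :
    ∀ a a' : EuclideanSpace ℝ (Fin k),
      (φ a - φ a') ^ 2 ≤ 6 * H * (φ a + φ a') * ‖a - a'‖ ^ 2 := by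
  intro a a'
  lift H to ℝ≥0 using hH.le
  have hK := lipschitzWith_gradient_iff.1 (lipschitzWith_iff_norm_sub_le.2 hsmooth)
  refine (multi_dim_H_bound_general hdiff hnonneg hK a a').trans ?_
  gcongr
  · exact add_nonneg (hnonneg a) (hnonneg a')
  · exact le_mul_of_one_le_left H.2 (by norm_num)
end

section
/- Let X be a set of contexts and let π, π̂ : X × ℝ^k → ℝ^k be policies that are each non-expansive in the action component. Let ℓ : ℝ^k → ℝ be convex and L-Lipschitz. Fix β ∈ (0,1) and define π'(x,a) = β·π̂(x,a) + (1−β)·π(x,a). Fix a context sequence x₁,…,x_T and an initial action a₀, and define the roll-outs a_t = π(x_t, a_{t−1}) and a'_t = π'(x_t, a'_{t−1}) with a'₀ = a₀. Suppose ε ≥ 0 satisfies ‖π̂(x_t, a_{t−1}) − π(x_t, a_{t−1})‖ ≤ ε for all t = 1,…,T. Then (1/T)·Σ_{t=1}^T ℓ(a'_t) − (1/T)·Σ_{t=1}^T ℓ(a_t) ≤ β·ε·L·T + β·[(1/T)·Σ_{t=1}^T ℓ(π̂(x_t, a_{t−1})) − (1/T)·Σ_{t=1}^T ℓ(a_t)].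 -/
/-! The roll-out `a` of `π` is almost an orbit of the mixture `π' = β·π̂ + (1−β)·π`: each of its
steps misses the step of `π'` by `β·‖π̂ − π‖ ≤ β·ε`. As `π'` is non-expansive, these errors are
carried along without growing, so after `t` steps the two roll-outs are at most `t·β·ε` apart.
Convexity bounds the loss of one step of `π'` taken from the roll-out of `π`, the Lipschitz
condition pays `L·(t − 1)·β·ε` for starting that step from the roll-out of `π'` instead, and
averaging `t − 1` over `t = 1, …, T` gives `(T − 1)/2`. -/

theorem dist_orbit_le_sum_dist_step {α : Type*} [PseudoMetricSpace α] {f : ℕ → α → α}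
    (hf : ∀ t, LipschitzWith 1 (f t)) {a b : ℕ → α} (h0 : b 0 = a 0)
    (hb : ∀ t, b (t + 1) = f t (b t)) (n : ℕ) :
    dist (b n) (a n) ≤ ∑ t ∈ Finset.range n, dist (f t (a t)) (a (t + 1)) := by
  induction n with
  | zero => simp [h0]
  | succ n ih =>
    calc dist (b (n + 1)) (a (n + 1))
        ≤ dist (f n (b n)) (f n (a n)) + dist (f n (a n)) (a (n + 1)) :=
          hb n ▸ dist_triangle _ _ _
      _ ≤ dist (b n) (a n) + dist (f n (a n)) (a (n + 1)) := by
          gcongr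
          simpa using (hf n).dist_le_mul (b n) (a n)
      _ ≤ ∑ t ∈ Finset.range (n + 1), dist (f t (a t)) (a (t + 1)) := by
          rw [Finset.sum_range_succ]
          gcongr

theorem sum_range_natCast {K : Type*} [DivisionRing K] [NeZero (2 : K)] (n : ℕ) :
    ∑ t ∈ Finset.range n, (t : K) = n * (n - 1) / 2 := by
  rw [← Nat.cast_sum, Finset.sum_range_id, ← Nat.choose_two_right, Nat.cast_choose_two]

/-- A policy: it maps a state, consisting of a context in `X` and the previous action in `E`, to
the next action. -/
abbrev Policy (X E : Type*) := X × E → E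

/-- The trajectory loss over the steps `1, …, T`; the initial action `a 0` incurs no loss. -/
noncomputable def trajectoryLoss {E : Type*} (ℓ : E → ℝ) (T : ℕ) (a : ℕ → E) : ℝ :=
  (1 / T : ℝ) * ∑ t ∈ Finset.Icc 1 T, ℓ (a t)

theorem trajectoryLoss_eq_sum_range {E : Type*} (ℓ : E → ℝ) (T : ℕ) (a : ℕ → E) :
    trajectoryLoss ℓ T a = (1 / T : ℝ) * ∑ t ∈ Finset.range T, ℓ (a (t + 1)) := by
  rw [trajectoryLoss, Finset.range_eq_Ico, Finset.sum_Ico_add' (fun t => ℓ (a t))]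
  rfl

namespace Policy

/-- `a` is the roll-out of `π` on the contexts `x 1, x 2, …` from the initial action `a 0`;
`x 0` is never read. -/
def IsRollOut {X E : Type*} (π : Policy X E) (x : ℕ → X) (a : ℕ → E) : Prop :=
  ∀ t, a (t + 1) = π (x (t + 1), a t)

/-- The interpolated policy `π' = β·π̂ + (1−β)·π`. -/
def interpolate {X E : Type*} [AddCommGroup E] [Module ℝ E] (β : ℝ) (πhat π : Policy X E) :
    Policy X E :=
  fun s => β • πhat s + (1 - β) • π s

variable {X E : Type*} [SeminormedAddCommGroup E]

/-- Stability Condition 1: for every fixed context the policy is non-expansive in the action. -/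
def IsNonexpansive (π : Policy X E) : Prop :=
  ∀ (x : X) (a a' : E), ‖π (x, a) - π (x, a')‖ ≤ ‖a - a'‖

theorem IsNonexpansive.lipschitzWith {π : Policy X E} (hπ : π.IsNonexpansive) (x : X) :
    LipschitzWith 1 fun a => π (x, a) :=
  .mk_one fun a a' => by simpa only [dist_eq_norm] using hπ x a a'

variable [NormedSpace ℝ E]

variable {π πhat : Policy X E} {β : ℝ}

theorem IsNonexpansive.interpolate (hπhat : πhat.IsNonexpansive) (hπ : π.IsNonexpansive)
    (hβ : β ∈ Set.Icc (0 : ℝ) 1) : (interpolate β πhat π).IsNonexpansive := by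
  intro x a a'
  obtain ⟨hβ0, hβ1⟩ := hβ
  have hβ1' : 0 ≤ 1 - β := sub_nonneg.2 hβ1
  calc ‖Policy.interpolate β πhat π (x, a) - Policy.interpolate β πhat π (x, a')‖
      = ‖β • (πhat (x, a) - πhat (x, a')) + (1 - β) • (π (x, a) - π (x, a'))‖ := by
        congr 1
        simp only [Policy.interpolate]
        module
    _ ≤ β * ‖πhat (x, a) - πhat (x, a')‖ + (1 - β) * ‖π (x, a) - π (x, a')‖ := by
        grw [norm_add_le]
        rw [norm_smul_of_nonneg hβ0, norm_smul_of_nonneg hβ1']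
    _ ≤ β * ‖a - a'‖ + (1 - β) * ‖a - a'‖ := by
        grw [hπhat x a a', hπ x a a']
    _ = ‖a - a'‖ := by ring

theorem dist_interpolate_right (hβ : 0 ≤ β) (s : X × E) :
    dist (interpolate β πhat π s) (π s) = β * ‖πhat s - π s‖ := by
  rw [dist_eq_norm, ← norm_smul_of_nonneg hβ]
  congr 1
  simp only [interpolate]
  module

variable {x : ℕ → X} {a a' : ℕ → E} {ε : ℝ}

theorem IsRollOut.dist_interpolate_le (hβ : 0 ≤ β)
    (hmix : (interpolate β πhat π).IsNonexpansive) (h0 : a' 0 = a 0)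
    (ha : π.IsRollOut x a) (ha' : (interpolate β πhat π).IsRollOut x a') {n : ℕ}
    (hclose : ∀ t < n, ‖πhat (x (t + 1), a t) - π (x (t + 1), a t)‖ ≤ ε) :
    dist (a' n) (a n) ≤ n * (β * ε) :=
  calc dist (a' n) (a n)
      ≤ ∑ t ∈ Finset.range n, dist (interpolate β πhat π (x (t + 1), a t)) (a (t + 1)) :=
        dist_orbit_le_sum_dist_step (fun t => hmix.lipschitzWith (x (t + 1))) h0 ha' n
    _ ≤ ∑ _t ∈ Finset.range n, β * ε := by
        refine Finset.sum_le_sum fun t ht => ?_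
        rw [ha t, dist_interpolate_right hβ]
        exact mul_le_mul_of_nonneg_left (hclose t (Finset.mem_range.1 ht)) hβ
    _ = n * (β * ε) := by simp

theorem IsRollOut.loss_interpolate_succ_le {ℓ : E → ℝ} (hconv : ConvexOn ℝ Set.univ ℓ)
    {L : NNReal} (hlip : LipschitzWith L ℓ) (hβ : β ∈ Set.Icc (0 : ℝ) 1)
    (hmix : (interpolate β πhat π).IsNonexpansive) (h0 : a' 0 = a 0)
    (ha : π.IsRollOut x a) (ha' : (interpolate β πhat π).IsRollOut x a') {n : ℕ}
    (hclose : ∀ t < n, ‖πhat (x (t + 1), a t) - π (x (t + 1), a t)‖ ≤ ε) :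
    ℓ (a' (n + 1)) ≤
      β * ℓ (πhat (x (n + 1), a n)) + (1 - β) * ℓ (a (n + 1)) + β * ε * L * n := by
  have hconvex : ℓ (interpolate β πhat π (x (n + 1), a n)) ≤
      β * ℓ (πhat (x (n + 1), a n)) + (1 - β) * ℓ (a (n + 1)) := by
    rw [ha n]
    exact hconv.2 (Set.mem_univ _) (Set.mem_univ _) hβ.1 (sub_nonneg.2 hβ.2) (by ring)
  have hdrift : dist (a' (n + 1)) (interpolate β πhat π (x (n + 1), a n)) ≤ n * (β * ε) :=
    calc dist (a' (n + 1)) (interpolate β πhat π (x (n + 1), a n))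
        ≤ dist (a' n) (a n) := by
          simpa [ha' n] using (hmix.lipschitzWith (x (n + 1))).dist_le_mul (a' n) (a n)
      _ ≤ n * (β * ε) := ha.dist_interpolate_le hβ.1 hmix h0 ha' hclose
  have hloss := (Real.sub_le_dist _ _).trans (hlip.dist_le_mul_of_le hdrift)
  linarith

end Policy

theorem T_dependent_improvement_general {X E : Type*} [SeminormedAddCommGroup E]
    [NormedSpace ℝ E] {π πhat : Policy X E} {ℓ : E → ℝ} (hconv : ConvexOn ℝ Set.univ ℓ)
    {L : NNReal} (hlip : LipschitzWith L ℓ) {β : ℝ} (hβ : β ∈ Set.Icc (0 : ℝ) 1)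
    (hmix : (Policy.interpolate β πhat π).IsNonexpansive) {T : ℕ} (hT : 1 ≤ T)
    {x : ℕ → X} {a a' : ℕ → E} (h0 : a' 0 = a 0)
    (ha : π.IsRollOut x a) (ha' : (Policy.interpolate β πhat π).IsRollOut x a') {ε : ℝ}
    (hclose : ∀ t, t + 1 < T → ‖πhat (x (t + 1), a t) - π (x (t + 1), a t)‖ ≤ ε) :
    trajectoryLoss ℓ T a' - trajectoryLoss ℓ T a ≤
      β * ε * L * ((T - 1) / 2) +
        β * (trajectoryLoss ℓ T (fun t => πhat (x t, a (t - 1))) - trajectoryLoss ℓ T a) := by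
  have hT0 : (T : ℝ) ≠ 0 := Nat.cast_ne_zero.2 (Nat.one_le_iff_ne_zero.1 hT)
  suffices h : trajectoryLoss ℓ T a' ≤
      β * trajectoryLoss ℓ T (fun t => πhat (x t, a (t - 1))) +
        (1 - β) * trajectoryLoss ℓ T a + β * ε * L * ((T - 1) / 2) by linarith
  simp only [trajectoryLoss_eq_sum_range, Nat.add_sub_cancel]
  calc (1 / T : ℝ) * ∑ t ∈ Finset.range T, ℓ (a' (t + 1))
      ≤ (1 / T : ℝ) * ∑ t ∈ Finset.range T,
          (β * ℓ (πhat (x (t + 1), a t)) + (1 - β) * ℓ (a (t + 1)) + β * ε * L * t) := by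
        gcongr with t ht
        exact ha.loss_interpolate_succ_le hconv hlip hβ hmix h0 ha' fun s hs =>
          hclose s (by have := Finset.mem_range.1 ht; lia)
    _ = _ := by
        simp only [Finset.sum_add_distrib, ← Finset.mul_sum, sum_range_natCast]
        field_simp

/-- Theorem 1 of the paper (`T`-dependent improvement): for non-expansive (in action)
policies `π, π̂`, convex `L`-Lipschitz loss `ℓ`, and interpolation
`π' = β·π̂ + (1−β)·π`, the trajectory loss of `π'` exceeds that of `π` by at most
`β·ε·L·T + β·(ℓ_π(π̂) − ℓ_π(π))`. -/
theorem T_dependent_improvement {X : Type*} {k : ℕ}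
    (π πhat : X × EuclideanSpace ℝ (Fin k) → EuclideanSpace ℝ (Fin k))
    (hπ : ∀ (x : X) (a a' : EuclideanSpace ℝ (Fin k)),
      ‖π (x, a) - π (x, a')‖ ≤ ‖a - a'‖)
    (hπhat : ∀ (x : X) (a a' : EuclideanSpace ℝ (Fin k)),
      ‖πhat (x, a) - πhat (x, a')‖ ≤ ‖a - a'‖)
    (ℓ : EuclideanSpace ℝ (Fin k) → ℝ)
    (hconv : ConvexOn ℝ Set.univ ℓ)
    (L : ℝ) (hL0 : 0 ≤ L)
    (hlip : ∀ u v : EuclideanSpace ℝ (Fin k), |ℓ u - ℓ v| ≤ L * ‖u - v‖)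
    (β : ℝ) (hβ : β ∈ Set.Ioo (0 : ℝ) 1)
    (π' : X × EuclideanSpace ℝ (Fin k) → EuclideanSpace ℝ (Fin k))
    (hπ' : ∀ (x : X) (a : EuclideanSpace ℝ (Fin k)),
      π' (x, a) = β • πhat (x, a) + (1 - β) • π (x, a))
    (T : ℕ) (hT : 1 ≤ T) (x : ℕ → X) (a₀ : EuclideanSpace ℝ (Fin k))
    (a a' : ℕ → EuclideanSpace ℝ (Fin k))
    (ha0 : a 0 = a₀) (ha'0 : a' 0 = a₀)
    (ha : ∀ t : ℕ, a (t + 1) = π (x (t + 1), a t))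
    (ha' : ∀ t : ℕ, a' (t + 1) = π' (x (t + 1), a' t))
    (ε : ℝ) (hε : 0 ≤ ε)
    (hclose : ∀ t : ℕ, 1 ≤ t → t ≤ T →
      ‖πhat (x t, a (t - 1)) - π (x t, a (t - 1))‖ ≤ ε) :
    (1 / T : ℝ) * ∑ t ∈ Finset.Icc 1 T, ℓ (a' t)
      - (1 / T : ℝ) * ∑ t ∈ Finset.Icc 1 T, ℓ (a t)
    ≤ β * ε * L * T
      + β * ((1 / T : ℝ) * ∑ t ∈ Finset.Icc 1 T, ℓ (πhat (x t, a (t - 1)))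
        - (1 / T : ℝ) * ∑ t ∈ Finset.Icc 1 T, ℓ (a t)) := by
  obtain rfl : π' = Policy.interpolate β πhat π := funext fun s => hπ' s.1 s.2
  lift L to NNReal using hL0
  have hlip' : LipschitzWith L ℓ :=
    .of_dist_le_mul fun u v => by simpa only [dist_eq_norm, Real.norm_eq_abs] using hlip u v
  have hβ' : β ∈ Set.Icc (0 : ℝ) 1 := Set.Ioo_subset_Icc_self hβ
  have hmix := Policy.IsNonexpansive.interpolate hπhat hπ hβ'
  refine (T_dependent_improvement_general hconv hlip' hβ' hmix hT (ha'0.trans ha0.symm) ha ha'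
    fun t ht => hclose (t + 1) (by lia) ht.le).trans ?_
  have hβ0 : 0 ≤ β := hβ'.1
  unfold trajectoryLoss
  gcongr
  linarith [(T.cast_nonneg : (0 : ℝ) ≤ T)]
end

section
/- Let X be a set of contexts, λ > 0, and let f, f̂ : X × ℝ → ℝ. Fix a context sequence x₁,…,x_T, an expert action sequence a₁*,…,a_T* ∈ ℝ, and a common initial action a₀ = â₀. Define a_t = (f(x_t, a_{t−1}) + λ·a_{t−1})/(1+λ) and â_t = (f̂(x_t, â_{t−1}) + λ·â_{t−1})/(1+λ) for t = 1,…,T. Suppose (1/T)·Σ_{t=1}^T |f(x_t, a_{t−1}) − a_t*| ≤ ω and (1/T)·Σ_{t=1}^T |f̂(x_t, â_{t−1}) − a_t*| ≤ ω, and let Ω = (1/T)·Σ_{t=1}^T |a_t* − a_{t−1}|. Then (1/T)·Σ_{t=1}^T |â_t − â_{t−1}| ≥ (Ω − 3ω)/(1+λ). -/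
/-!
Write `d t = ‖a t - ahat t‖`. Subtracting the two roll-out equations gives
`(1 + lam) * d (t + 1) ≤ e t + lam * d t`, where `e t` is the disagreement of the two regressors.
Summing, the coefficients `1 + lam` and `lam` of each `d t` leave exactly one copy of it, so
`∑ d t ≤ ∑ e t` when the roll-outs start together, and `e t` is at most the sum of the two errors.
The expert's distance to the roll-out of `f` is then controlled by passing through the prediction
of `fhat` and through `ahat`, because `fhat (x (t + 1), ahat t) - ahat t` is `1 + lam` times the
increment of `ahat`. The error of `f` is thus paid once and that of `fhat` twice, hence the
factor `3`.
-/

/-- The actions `a` are the roll-out, on the contexts `x 1, x 2, …` and from the initial action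
`a 0`, of the policy of `Π_λ` built from the regressor `f`. Actions may live in any real vector
space. At `lam = -1` the inverse takes its junk value `0`. -/
def IsSmoothRollout {X E : Type*} [AddCommGroup E] [Module ℝ E]
    (lam : ℝ) (f : X × E → E) (x : ℕ → X) (a : ℕ → E) : Prop :=
  ∀ t : ℕ, a (t + 1) = (1 + lam)⁻¹ • (f (x (t + 1), a t) + lam • a t)

theorem isSmoothRollout_real_iff {X : Type*} {lam : ℝ} {f : X × ℝ → ℝ} {x : ℕ → X} {a : ℕ → ℝ} :
    IsSmoothRollout lam f x a ↔
      ∀ t : ℕ, a (t + 1) = (f (x (t + 1), a t) + lam * a t) / (1 + lam) := by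
  simp only [IsSmoothRollout, smul_eq_mul, div_eq_inv_mul]

theorem sum_range_add_mul_le_of_forall_mul_succ_le {R : Type*} [Semiring R] [PartialOrder R]
    [IsOrderedAddMonoid R] {c : R} {d e : ℕ → R}
    (h : ∀ t, (1 + c) * d (t + 1) ≤ e t + c * d t) (n : ℕ) :
    ∑ t ∈ Finset.range n, d t + (1 + c) * d n ≤ ∑ t ∈ Finset.range n, e t + (1 + c) * d 0 := by
  induction n with
  | zero => simp only [Finset.range_zero, Finset.sum_empty, le_refl]
  | succ n ih =>
    rw [Finset.sum_range_succ, Finset.sum_range_succ]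
    calc ∑ t ∈ Finset.range n, d t + d n + (1 + c) * d (n + 1)
        ≤ ∑ t ∈ Finset.range n, d t + d n + (e n + c * d n) := by gcongr; exact h n
      _ = ∑ t ∈ Finset.range n, d t + (1 + c) * d n + e n := by rw [add_mul, one_mul]; abel
      _ ≤ ∑ t ∈ Finset.range n, e t + (1 + c) * d 0 + e n := by gcongr
      _ = ∑ t ∈ Finset.range n, e t + e n + (1 + c) * d 0 := add_right_comm _ _ _

theorem sum_Icc_one_eq_sum_range_succ {M : Type*} [AddCommMonoid M] (u : ℕ → M) (n : ℕ) :
    ∑ t ∈ Finset.Icc 1 n, u t = ∑ t ∈ Finset.range n, u (t + 1) := by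
  rw [← Finset.Ico_add_one_right_eq_Icc, Finset.range_eq_Ico, Finset.sum_Ico_add']

namespace IsSmoothRollout

theorem one_add_smul_succ {X E : Type*} [AddCommGroup E] [Module ℝ E]
    {lam : ℝ} {f : X × E → E} {x : ℕ → X} {a : ℕ → E}
    (ha : IsSmoothRollout lam f x a) (hlam : 1 + lam ≠ 0) (t : ℕ) :
    (1 + lam) • a (t + 1) = f (x (t + 1), a t) + lam • a t := by
  rw [ha t, smul_inv_smul₀ hlam]

variable {X E : Type*} [SeminormedAddCommGroup E] [NormedSpace ℝ E] {lam : ℝ} {f g : X × E → E}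
  {x : ℕ → X} {a b : ℕ → E}

theorem norm_regressor_sub_eq (ha : IsSmoothRollout lam f x a) (hlam : 0 < 1 + lam) (t : ℕ) :
    ‖f (x (t + 1), a t) - a t‖ = (1 + lam) * ‖a (t + 1) - a t‖ := by
  have increment : f (x (t + 1), a t) - a t = (1 + lam) • (a (t + 1) - a t) := by
    rw [smul_sub, ha.one_add_smul_succ hlam.ne']
    module
  rw [increment, norm_smul_of_nonneg hlam.le]

theorem mul_norm_sub_succ_le (ha : IsSmoothRollout lam f x a) (hb : IsSmoothRollout lam g x b)
    (hlam : 0 ≤ lam) (t : ℕ) :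
    (1 + lam) * ‖a (t + 1) - b (t + 1)‖ ≤
      ‖f (x (t + 1), a t) - g (x (t + 1), b t)‖ + lam * ‖a t - b t‖ := by
  have hlam' : 0 < 1 + lam := by positivity
  calc (1 + lam) * ‖a (t + 1) - b (t + 1)‖
      = ‖(1 + lam) • a (t + 1) - (1 + lam) • b (t + 1)‖ := by
        rw [← smul_sub, norm_smul_of_nonneg hlam'.le]
    _ = ‖(f (x (t + 1), a t) - g (x (t + 1), b t)) + lam • (a t - b t)‖ := by
        rw [ha.one_add_smul_succ hlam'.ne', hb.one_add_smul_succ hlam'.ne', smul_sub,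
          add_sub_add_comm]
    _ ≤ ‖f (x (t + 1), a t) - g (x (t + 1), b t)‖ + lam * ‖a t - b t‖ := by
        rw [← norm_smul_of_nonneg hlam]
        exact norm_add_le _ _

theorem sum_norm_sub_le (ha : IsSmoothRollout lam f x a) (hb : IsSmoothRollout lam g x b)
    (hlam : 0 ≤ lam) (h0 : a 0 = b 0) (n : ℕ) :
    ∑ t ∈ Finset.range n, ‖a t - b t‖ ≤
      ∑ t ∈ Finset.range n, ‖f (x (t + 1), a t) - g (x (t + 1), b t)‖ := by
  have telescoped := sum_range_add_mul_le_of_forall_mul_succ_le (d := fun t ↦ ‖a t - b t‖)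
    (ha.mul_norm_sub_succ_le hb hlam) n
  rw [h0, sub_self, norm_zero, mul_zero, add_zero] at telescoped
  exact (le_add_of_nonneg_right (by positivity)).trans telescoped

theorem sum_norm_target_sub_le (ha : IsSmoothRollout lam f x a) (hb : IsSmoothRollout lam g x b)
    (hlam : 0 ≤ lam) (h0 : a 0 = b 0) (y : ℕ → E) (n : ℕ) :
    ∑ t ∈ Finset.range n, ‖y t - a t‖ ≤
      ∑ t ∈ Finset.range n, ‖f (x (t + 1), a t) - y t‖ +
        2 * ∑ t ∈ Finset.range n, ‖g (x (t + 1), b t) - y t‖ +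
        (1 + lam) * ∑ t ∈ Finset.range n, ‖b (t + 1) - b t‖ := by
  have target_gap (t : ℕ) : ‖y t - a t‖ ≤
      ‖g (x (t + 1), b t) - y t‖ + (1 + lam) * ‖b (t + 1) - b t‖ + ‖a t - b t‖ := by
    rw [← hb.norm_regressor_sub_eq (by positivity), norm_sub_rev _ (y t), norm_sub_rev (a t)]
    exact (norm_sub_le_norm_sub_add_norm_sub _ (b t) _).trans
      (by gcongr; exact norm_sub_le_norm_sub_add_norm_sub _ _ _)
  have regressor_gap (t : ℕ) : ‖f (x (t + 1), a t) - g (x (t + 1), b t)‖ ≤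
      ‖f (x (t + 1), a t) - y t‖ + ‖g (x (t + 1), b t) - y t‖ := by
    rw [norm_sub_rev (g _)]
    exact norm_sub_le_norm_sub_add_norm_sub _ _ _
  have sum_target_gap := Finset.sum_le_sum fun t (_ : t ∈ Finset.range n) ↦ target_gap t
  have sum_regressor_gap := Finset.sum_le_sum fun t (_ : t ∈ Finset.range n) ↦ regressor_gap t
  simp only [Finset.sum_add_distrib, ← Finset.mul_sum] at sum_target_gap sum_regressor_gap
  linarith [ha.sum_norm_sub_le hb hlam h0 n]

end IsSmoothRollout

theorem rollout_first_order_difference_lower_bound_general {X E : Type*}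
    [SeminormedAddCommGroup E] [NormedSpace ℝ E] {lam : ℝ} (hlam : 0 ≤ lam)
    {f fhat : X × E → E} {T : ℕ} (hT : 1 ≤ T) {x : ℕ → X} {astar a ahat : ℕ → E}
    (h0 : a 0 = ahat 0) (ha : IsSmoothRollout lam f x a) (hahat : IsSmoothRollout lam fhat x ahat)
    {ω ωhat : ℝ}
    (hferr : (1 / T : ℝ) * ∑ t ∈ Finset.Icc 1 T, ‖f (x t, a (t - 1)) - astar t‖ ≤ ω)
    (hfhaterr :
      (1 / T : ℝ) * ∑ t ∈ Finset.Icc 1 T, ‖fhat (x t, ahat (t - 1)) - astar t‖ ≤ ωhat) :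
    ((1 / T : ℝ) * ∑ t ∈ Finset.Icc 1 T, ‖astar t - a (t - 1)‖ - (ω + 2 * ωhat)) / (1 + lam) ≤
      (1 / T : ℝ) * ∑ t ∈ Finset.Icc 1 T, ‖ahat t - ahat (t - 1)‖ := by
  simp only [sum_Icc_one_eq_sum_range_succ, Nat.add_sub_cancel] at hferr hfhaterr ⊢
  have weight_pos : (0 : ℝ) < 1 / T := one_div_pos.2 (Nat.cast_pos.2 hT)
  have averaged := mul_le_mul_of_nonneg_left
    (ha.sum_norm_target_sub_le hahat hlam h0 (fun t ↦ astar (t + 1)) T) weight_pos.le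
  rw [div_le_iff₀ (by positivity)]
  linarith

/-- Final step in the proof of Proposition 1 of the paper: in the smooth policy class
`Π_λ` with 1-d actions, with `Ω` the average gap between expert actions and the roll-out
of `f`, the average first-order difference of the roll-out of `f̂` is bounded below:
`(1/T)·Σ_t |â_t − â_{t−1}| ≥ (Ω − 3ω)/(1+λ)`. -/
theorem rollout_first_order_difference_lower_bound {X : Type*}
    (lam : ℝ) (hlam : 0 < lam)
    (f fhat : X × ℝ → ℝ)
    (T : ℕ) (hT : 1 ≤ T) (x : ℕ → X) (astar : ℕ → ℝ)
    (a ahat : ℕ → ℝ) (h0 : a 0 = ahat 0)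
    (haroll : ∀ t : ℕ, a (t + 1) = (f (x (t + 1), a t) + lam * a t) / (1 + lam))
    (hahatroll : ∀ t : ℕ,
      ahat (t + 1) = (fhat (x (t + 1), ahat t) + lam * ahat t) / (1 + lam))
    (ω Ω : ℝ)
    (hferr : (1 / T : ℝ) * ∑ t ∈ Finset.Icc 1 T, |f (x t, a (t - 1)) - astar t| ≤ ω)
    (hfhaterr :
      (1 / T : ℝ) * ∑ t ∈ Finset.Icc 1 T, |fhat (x t, ahat (t - 1)) - astar t| ≤ ω)
    (hΩ : Ω = (1 / T : ℝ) * ∑ t ∈ Finset.Icc 1 T, |astar t - a (t - 1)|) :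
    (1 / T : ℝ) * ∑ t ∈ Finset.Icc 1 T, |ahat t - ahat (t - 1)|
      ≥ (Ω - 3 * ω) / (1 + lam) := by
  have general := rollout_first_order_difference_lower_bound_general hlam.le hT h0
    (isSmoothRollout_real_iff.2 haroll) (isSmoothRollout_real_iff.2 hahatroll) hferr hfhaterr
  rwa [ge_iff_le, hΩ, show 3 * ω = ω + 2 * ω by ring]
end
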